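/- Let s ≥ 2 be an integer, let f be a homogeneous polynomial of degree s in d variables with rational coefficients, and let D = D(f) be the common denominator of its coefficients. Let α = (a₁/q, …, a_d/q) and β = (b₁/r, …, b_d/r) be rational vectors (q, r positive integers, a_i, b_i ∈ ℤ) with f(α − β) ≠ 0. If f(α) = A/q and f(β) = B/r for some integers A and B, then |f(α − β)| ≥ 1/(D q^{s−1} r^{s−1}). -/

import Mathlib

lemma aux_dvd {d : ℕ} (q r : ℤ) (a b : Fin d → ℤ) (g : MvPolynomial (Fin d) ℤ) :
    (∃ N, MvPolynomial.eval (fun i => r * a i) g = MvPolynomial.eval (fun _ => 0) g + r * N) ∧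
    (∃ N, MvPolynomial.eval (fun i => -(q * b i)) g = MvPolynomial.eval (fun _ => 0) g + q * N) ∧
    (∃ N, MvPolynomial.eval (fun i => r * a i - q * b i) g =
      MvPolynomial.eval (fun i => r * a i) g + MvPolynomial.eval (fun i => -(q * b i)) g
        - MvPolynomial.eval (fun _ => 0) g + q * r * N) := by
  induction g using MvPolynomial.induction_on with
  | C c => exact ⟨⟨0, by simp⟩, ⟨0, by simp⟩, ⟨0, by simp⟩⟩
  | add p p' h h' =>
    obtain ⟨⟨x, hx⟩, ⟨y, hy⟩, ⟨z, hz⟩⟩ := h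
    obtain ⟨⟨x', hx'⟩, ⟨y', hy'⟩, ⟨z', hz'⟩⟩ := h'
    refine ⟨⟨x + x', ?_⟩, ⟨y + y', ?_⟩, ⟨z + z', ?_⟩⟩ <;> simp only [map_add]
    · rw [hx, hx']; ring
    · rw [hy, hy']; ring
    · rw [hz, hz']; ring
  | mul_X p i h =>
    obtain ⟨⟨x, hx⟩, ⟨y, hy⟩, ⟨z, hz⟩⟩ := h
    refine ⟨⟨MvPolynomial.eval (fun i => r * a i) p * a i, ?_⟩,
      ⟨-(MvPolynomial.eval (fun i => -(q * b i)) p * b i), ?_⟩,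
      ⟨a i * y - b i * x + z * (r * a i - q * b i), ?_⟩⟩ <;>
      simp only [map_mul, MvPolynomial.eval_X]
    · ring
    · ring
    · rw [hz, hx, hy]; ring

lemma aux_hom {d s : ℕ} {f : MvPolynomial (Fin d) ℚ} (h : f.IsHomogeneous s) (c : ℚ)
    (x : Fin d → ℚ) : MvPolynomial.eval (fun i => c * x i) f = c ^ s * MvPolynomial.eval x f := by
  rw [MvPolynomial.eval_eq, MvPolynomial.eval_eq, Finset.mul_sum]
  refine Finset.sum_congr rfl fun m hm => ?_
  have := h (MvPolynomial.mem_support_iff.1 hm)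
  have h2 : ∑ i ∈ m.support, m i = s := by
    rw [← this, Finsupp.weight_apply]; simp [Finsupp.sum]
  simp only [mul_pow]
  rw [Finset.prod_mul_distrib, Finset.prod_pow_eq_pow_sum, h2]
  ring

lemma aux_int {d : ℕ} (f : MvPolynomial (Fin d) ℚ) (D : ℕ)
    (hD : D = f.support.lcm fun m => (f.coeff m).den) :
    ∃ g : MvPolynomial (Fin d) ℤ, ∀ x : Fin d → ℤ,
      ((MvPolynomial.eval x g : ℤ) : ℚ) = D * MvPolynomial.eval (fun i => (x i : ℚ)) f := by
  refine ⟨∑ m ∈ f.support, MvPolynomial.monomial m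
    ((f.coeff m).num * ((D / (f.coeff m).den : ℕ) : ℤ)), fun x => ?_⟩
  rw [MvPolynomial.eval_eq (f := f), Finset.mul_sum, map_sum, Int.cast_sum]
  refine Finset.sum_congr rfl fun m hm => ?_
  have hdvd : (f.coeff m).den ∣ D := hD ▸ Finset.dvd_lcm (f := fun m => (f.coeff m).den) hm
  have h0 : ((f.coeff m).den : ℚ) ≠ 0 := by exact_mod_cast (f.coeff m).den_nz
  have key : ((f.coeff m).num : ℚ) * ((D / (f.coeff m).den : ℕ) : ℚ) = D * f.coeff m := by
    rw [Nat.cast_div hdvd h0]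
    nth_rewrite 3 [← Rat.num_div_den (f.coeff m)]
    field_simp
  rw [MvPolynomial.eval_monomial, Finsupp.prod]
  rw [Int.cast_mul, Int.cast_mul, Int.cast_natCast, ← mul_assoc, ← key]
  push_cast
  rfl


/-- Inequality (13) in Lemma 1(ii): let `f` be a homogeneous polynomial of degree `s ≥ 2`
with rational coefficients and `D` the common denominator of its coefficients. If
`α = a/q`, `β = b/r` are rational vectors with `f(α - β) ≠ 0`, `f(α) = A/q` and
`f(β) = B/r` for integers `A, B`, then `|f(α - β)| ≥ 1/(D q^{s-1} r^{s-1})`. -/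
theorem simplex_lemma_value_ii
    (d s : ℕ) (hs : 2 ≤ s)
    (f : MvPolynomial (Fin d) ℚ) (hhom : f.IsHomogeneous s)
    (D : ℕ) (hD : D = f.support.lcm fun m => (f.coeff m).den)
    (q r : ℤ) (hq : 0 < q) (hr : 0 < r)
    (a b : Fin d → ℤ)
    (hne : MvPolynomial.eval (fun i => (a i : ℚ) / (q : ℚ) - (b i : ℚ) / (r : ℚ)) f ≠ 0)
    (A B : ℤ)
    (hA : MvPolynomial.eval (fun i => (a i : ℚ) / (q : ℚ)) f = (A : ℚ) / (q : ℚ))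
    (hB : MvPolynomial.eval (fun i => (b i : ℚ) / (r : ℚ)) f = (B : ℚ) / (r : ℚ)) :
    |MvPolynomial.eval (fun i => (a i : ℚ) / (q : ℚ) - (b i : ℚ) / (r : ℚ)) f|
      ≥ 1 / ((D : ℚ) * (q : ℚ) ^ (s - 1) * (r : ℚ) ^ (s - 1)) := by
  obtain ⟨t, rfl⟩ : ∃ t, s = t + 2 := ⟨s - 2, by omega⟩
  obtain ⟨g, hg⟩ := aux_int f D hD
  obtain ⟨-, -, N, hN⟩ := aux_dvd q r a b g
  have hq' : (0 : ℚ) < q := by exact_mod_cast hq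
  have hr' : (0 : ℚ) < r := by exact_mod_cast hr
  have hDpos : 0 < D := by
    rw [hD]
    refine Nat.pos_of_ne_zero fun h => ?_
    rw [Finset.lcm_eq_zero_iff] at h
    obtain ⟨m, -, h⟩ := h
    exact (f.coeff m).den_nz h
  have hD' : (0 : ℚ) < D := by exact_mod_cast hDpos
  have e1 := aux_hom hhom ((q : ℚ) * r) (fun i => (a i : ℚ) / q - (b i : ℚ) / r)
  have e2 := aux_hom hhom ((q : ℚ) * r) (fun i => (a i : ℚ) / q)
  have e3 := aux_hom hhom (-((q : ℚ) * r)) (fun i => (b i : ℚ) / r)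
  have e4 := aux_hom hhom 0 (fun i => (b i : ℚ) / r)
  have f1 : (fun i => (q : ℚ) * r * ((a i : ℚ) / q - (b i : ℚ) / r))
      = fun i => ((r * a i - q * b i : ℤ) : ℚ) := by
    funext i; push_cast; field_simp
  have f2 : (fun i => (q : ℚ) * r * ((a i : ℚ) / q)) = fun i => ((r * a i : ℤ) : ℚ) := by
    funext i; push_cast; field_simp
  have f3 : (fun i => -((q : ℚ) * r) * ((b i : ℚ) / r)) = fun i => ((-(q * b i) : ℤ) : ℚ) := by
    funext i; push_cast; field_simp
  have f4 : (fun i => (0 : ℚ) * ((b i : ℚ) / r)) = fun i => ((0 : ℤ) : ℚ) := by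
    funext i; simp
  rw [f1] at e1
  rw [f2, hA] at e2
  rw [f3, hB] at e3
  rw [f4] at e4
  have hNQ := congrArg (Int.cast : ℤ → ℚ) hN
  rw [Int.cast_add, Int.cast_sub, Int.cast_add, hg, hg, hg, hg, e1, e2, e3, e4] at hNQ
  set v := MvPolynomial.eval (fun i => (a i : ℚ) / (q : ℚ) - (b i : ℚ) / (r : ℚ)) f with hv
  have key : (D : ℚ) * q ^ (t + 1) * r ^ (t + 1) * v =
      ((D * q ^ t * r ^ (t + 1) * A + D * (-1) ^ t * q ^ (t + 1) * r ^ t * B + N : ℤ) : ℚ) := by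
    have hqr : (q : ℚ) * r ≠ 0 := by positivity
    apply mul_left_cancel₀ hqr
    push_cast at hNQ ⊢
    have g1 : (D : ℚ) * (((q : ℚ) * r) ^ (t + 2) * (A / q)) =
        q * r * (D * q ^ t * r ^ (t + 1) * A) := by
      field_simp
      ring
    have g2 : (D : ℚ) * ((-((q : ℚ) * r)) ^ (t + 2) * (B / r)) =
        q * r * (D * (-1) ^ t * q ^ (t + 1) * r ^ t * B) := by
      rw [neg_pow]; field_simp; ring
    rw [g1, g2] at hNQ
    have g0 : (0 : ℚ) ^ (t + 2) = 0 := by simp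
    rw [g0] at hNQ
    linear_combination hNQ
  have hs1 : t + 2 - 1 = t + 1 := rfl
  rw [hs1]
  have hP : (0 : ℚ) < D * q ^ (t + 1) * r ^ (t + 1) := by positivity
  rw [ge_iff_le, div_le_iff₀ hP, mul_comm, ← abs_of_pos hP, ← abs_mul]
  have hne2 := mul_ne_zero hP.ne' hne
  rw [key] at hne2 ⊢
  rw [← Int.cast_abs]
  exact_mod_cast Int.one_le_abs (by exact_mod_cast hne2)
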